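/- Let ε > 0 and let (v_j)_{j≥1} be a strictly increasing sequence of positive reals with v_{j+1} − v_j ≥ ε for all j (so v_j → ∞). Let V : [0,∞) → ℝ be continuous, E ∈ ℝ, and m := liminf_{x→∞}(V(x) − E) > 0. Let (p_j)_{j≥1} be positive reals. Let ψ : [0,∞) → ℝ be continuous, strictly positive, square-integrable on [0,∞), and on each open interval (0,v₁) and (v_j, v_{j+1}) twice continuously differentiable with −ψ'' + Vψ = Eψ and ψ' < 0 there; at each point v_j the one-sided derivatives exist and satisfy ψ'(v_j⁺) = p_j · ψ'(v_j⁻). Then for every δ with 0 < δ < m, the function x ↦ ( ∏_{j : v_j ≤ x} p_j^{−1/2} ) · exp( ∫_0^x ( max(V(t) − E − δ, 0) )^{1/2} dt ) · ψ(x) is square-integrable and bounded on [0,∞). -/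

import Mathlib

open MeasureTheory Set Filter
open scoped Topology

/-!
Write `U = V - E` and `κ = ((U - δ)₊)^{1/2}`, so that `F' = κ F` between the vertices. There the
flux `W = F² ψ ψ'` satisfies `W' = F² ((ψ' + κ ψ)² + (U - κ²) ψ²)`, and it does not jump at the
vertices because the factor `p` picked up by `ψ'` cancels the factor `p⁻¹` picked up by `F²`.
Far out `U - κ² = δ`, so `W` is nondecreasing there, and `W ≤ 0` because `ψ' ≤ 0 ≤ ψ`; hence
`δ ∫ F² ψ² ≤ ∫ W' < ∞`. For the pointwise bound, `|((F ψ)²)'| ≤ δ^{-1/2} W'` bounds the oscillation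
of `(F ψ)²` on each edge, while its mean over an edge of length at least `ε` is bounded by the
integral estimate.
-/

section RealAnalysis

lemma abs_sub_le_sub_of_abs_deriv_le {f f' g g' : ℝ → ℝ} {x y : ℝ} (hxy : x ≤ y)
    (hf : ∀ z ∈ Icc x y, HasDerivAt f (f' z) z) (hg : ∀ z ∈ Icc x y, HasDerivAt g (g' z) z)
    (hfg : ∀ z ∈ Icc x y, |f' z| ≤ g' z) : |f y - f x| ≤ g y - g x := by
  have hf₀ : ∀ z ∈ Icc x y, HasDerivAt (fun z => f z - f x) (f' z) z :=
    fun z hz => (hf z hz).sub_const _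
  have hg₀ : ∀ z ∈ Icc x y, HasDerivAt (fun z => g z - g x) (g' z) z :=
    fun z hz => (hg z hz).sub_const _
  exact image_norm_le_of_norm_deriv_right_le_deriv_boundary'
    (fun z hz => (hf₀ z hz).continuousAt.continuousWithinAt)
    (fun z hz => (hf₀ z (Ico_subset_Icc_self hz)).hasDerivWithinAt) (by simp)
    (fun z hz => (hg₀ z hz).continuousAt.continuousWithinAt)
    (fun z hz => (hg₀ z (Ico_subset_Icc_self hz)).hasDerivWithinAt)
    (fun z hz => hfg z (Ico_subset_Icc_self hz)) (right_mem_Icc.2 hxy)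

lemma sub_mul_le_of_abs_deriv_le {f f' W W' : ℝ → ℝ} {s : Set ℝ} [s.OrdConnected] {c M : ℝ}
    (hc : 0 ≤ c) (hf : ∀ x ∈ s, HasDerivAt f (f' x) x) (hW : ∀ x ∈ s, HasDerivAt W (W' x) x)
    (hfW : ∀ x ∈ s, |f' x| ≤ c * W' x) (hM : ∀ x ∈ s, ∀ y ∈ s, W y - W x ≤ M) {x y : ℝ}
    (hx : x ∈ s) (hy : y ∈ s) : f x - c * M ≤ f y := by
  have osc : ∀ z ∈ s, ∀ w ∈ s, z ≤ w → |f w - f z| ≤ c * M := by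
    intro z hz w hw hzw
    have hIcc : Icc z w ⊆ s := s.Icc_subset hz hw
    calc |f w - f z| ≤ c * W w - c * W z :=
          abs_sub_le_sub_of_abs_deriv_le hzw (fun t ht => hf t (hIcc ht))
            (fun t ht => (hW t (hIcc ht)).const_mul c) (fun t ht => hfW t (hIcc ht))
      _ = c * (W w - W z) := by ring
      _ ≤ c * M := mul_le_mul_of_nonneg_left (hM z hz w hw) hc
  rcases le_total x y with hxy | hyx
  · linarith [neg_le_of_abs_le (osc x hx y hy hxy)]
  · linarith [le_of_abs_le (osc y hy x hx hyx)]

-- If `f x` were larger, then `f`, and with it `W'`, would be large on the whole interval,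
-- forcing `W` to oscillate by more than `M`.
lemma le_of_mul_le_deriv_of_abs_deriv_le {f f' W W' : ℝ → ℝ} {a b c δ M : ℝ} (hδ : 0 < δ)
    (hc : 0 ≤ c) (hf : ∀ x ∈ Ioo a b, HasDerivAt f (f' x) x)
    (hW : ∀ x ∈ Ioo a b, HasDerivAt W (W' x) x)
    (hfW : ∀ x ∈ Ioo a b, δ * f x ≤ W' x) (hf'W : ∀ x ∈ Ioo a b, |f' x| ≤ c * W' x)
    (hM : ∀ x ∈ Ioo a b, ∀ y ∈ Ioo a b, W y - W x ≤ M) {x : ℝ} (hx : x ∈ Ioo a b) :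
    f x ≤ 2 * M / (δ * (b - a)) + c * M := by
  have hab : a < b := hx.1.trans hx.2
  set y := a + (b - a) / 4
  set z := b - (b - a) / 4
  have hy : y ∈ Ioo a b := ⟨by grind, by grind⟩
  have hz : z ∈ Ioo a b := ⟨by grind, by grind⟩
  have W_growth : δ * (f x - c * M) * (z - y) ≤ W z - W y := by
    refine (convex_Ioo a b).mul_sub_le_image_sub_of_le_deriv
      (fun t ht => (hW t ht).continuousAt.continuousWithinAt)
      (fun t ht => (hW t (interior_subset ht)).differentiableAt.differentiableWithinAt)
      (fun t ht => ?_) y hy z hz (by grind)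
    rw [interior_Ioo] at ht
    have f_ge : f x - c * M ≤ f t := sub_mul_le_of_abs_deriv_le hc hf hW hf'W hM hx ht
    rw [(hW t ht).deriv]
    exact (mul_le_mul_of_nonneg_left f_ge hδ.le).trans (hfW t ht)
  have hyz : z - y = (b - a) / 2 := by grind
  have key : (f x - c * M) * (δ * (b - a)) ≤ 2 * M := by
    rw [hyz] at W_growth
    linarith [hM y hy z hz]
  linarith [(le_div_iff₀ (mul_pos hδ (sub_pos.2 hab))).2 key]

lemma integrableOn_Ioi_deriv_of_monotoneOn {W : ℝ → ℝ} {a : ℝ} (hW : MonotoneOn W (Ici a))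
    (hbdd : BddAbove (W '' Ici a)) : IntegrableOn (deriv W) (Ioi a) := by
  obtain ⟨B, hB⟩ := hbdd
  have hWIcc : ∀ b ≥ a, MonotoneOn W (uIcc a b) := fun b hb =>
    hW.mono (uIcc_of_le hb ▸ Icc_subset_Ici_self)
  refine integrableOn_Ioi_of_intervalIntegral_norm_bounded (l := atTop) (b := fun b => max a b)
    (B - W a) a (fun b => ?_) (tendsto_atTop_mono (le_max_right a) tendsto_id) ?_
  · exact (hWIcc _ (le_max_left a b)).intervalIntegrable_deriv.1
  filter_upwards [eventually_ge_atTop a] with b hb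
  rw [max_eq_right hb]
  have deriv_nonneg : ∀ x ∈ Ioo a b, 0 ≤ deriv W x := fun x hx => by
    rw [← derivWithin_of_mem_nhds (Ici_mem_nhds hx.1)]
    exact hW.derivWithin_nonneg
  calc ∫ x in a..b, ‖deriv W x‖ = ∫ x in a..b, deriv W x :=
        intervalIntegral.integral_congr_Ioo_of_le hb fun x hx =>
          Real.norm_of_nonneg (deriv_nonneg x hx)
    _ ≤ W b - W a := by
        have := (hWIcc b hb).intervalIntegral_deriv_mem_uIcc
        rw [uIcc_of_le (sub_nonneg.2 (hW self_mem_Ici hb hb))] at this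
        exact this.2
    _ ≤ B - W a := sub_le_sub_right (hB (mem_image_of_mem W hb)) _

lemma tendsto_atTop_of_le_sub {v : ℕ → ℝ} {ε : ℝ} (hε : 0 < ε) (hgap : ∀ n, ε ≤ v (n + 1) - v n) :
    Tendsto v atTop atTop := by
  have lower : ∀ n : ℕ, v 0 + n * ε ≤ v n := by
    intro n
    induction n with
    | zero => simp
    | succ n ih =>
      push_cast
      linarith [hgap n]
  exact tendsto_atTop_mono lower
    (tendsto_atTop_add_const_left _ _ (tendsto_natCast_atTop_atTop.atTop_mul_const hε))

end RealAnalysis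

section Subdivision

variable {α : Type*} [LinearOrder α] [NoMaxOrder α] {v : ℕ → α}

lemma exists_mem_Ico_of_le (hv : Monotone v) (hv' : Tendsto v atTop atTop) {k : ℕ} {x : α}
    (hx : v k ≤ x) : ∃ n ≥ k, x ∈ Ico (v n) (v (n + 1)) := by
  have hbdd : ¬ BddAbove (v '' Ici k) := by
    rintro ⟨B, hB⟩
    obtain ⟨n, hkn, hn⟩ :=
      ((eventually_ge_atTop k).and (hv'.eventually_gt_atTop B)).exists
    exact hn.not_ge (hB (mem_image_of_mem v hkn))
  have hcover := biUnion_Ici_Ico_map_succ (fun n hn => hv hn) hbdd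
  rw [← mem_Ici, ← hcover] at hx
  simpa only [mem_iUnion, exists_prop, mem_Ici, ge_iff_le, Nat.succ_eq_succ] using hx

lemma monotoneOn_Ici_of_monotoneOn_Icc {β : Type*} [Preorder β] {f : α → β} (hv : Monotone v)
    (hv' : Tendsto v atTop atTop) {k : ℕ}
    (hf : ∀ n ≥ k, MonotoneOn f (Icc (v n) (v (n + 1)))) : MonotoneOn f (Ici (v k)) := by
  have initial : ∀ n ≥ k, MonotoneOn f (Icc (v k) (v n)) := by
    intro n hn
    induction n, hn using Nat.le_induction with
    | base => simp
    | succ n hn ih =>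
      have hstep : v n ≤ v (n + 1) := hv n.le_succ
      rw [← Icc_union_Icc_eq_Icc (hv hn) hstep]
      exact ih.union_right (hf n hn) (isGreatest_Icc (hv hn)) (isLeast_Icc hstep)
  intro x hx y hy hxy
  obtain ⟨n, hn, hyn⟩ := exists_mem_Ico_of_le hv hv' hy
  exact initial (n + 1) (by lia) ⟨hx, hxy.trans hyn.2.le⟩ ⟨hy, hyn.2.le⟩ hxy

/-- The number of points of the sequence `v` in `(-∞, x]`; the value is meaningful only when there
are finitely many, as for `v` tending to infinity. -/
noncomputable def vertexCount {α : Type*} [LE α] (v : ℕ → α) (x : α) : ℕ :=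
  {j | v j ≤ x}.ncard

lemma le_iff_lt_vertexCount (hv : Monotone v) (hv' : Tendsto v atTop atTop) {j : ℕ} {x : α} :
    v j ≤ x ↔ j < vertexCount v x := by
  classical
  have hex : ∃ n, x < v n := (hv'.eventually_gt_atTop x).exists
  have hset : {j | v j ≤ x} = Iio (Nat.find hex) := by
    ext j
    rw [mem_ofPred_eq, mem_Iio, Nat.lt_find_iff]
    exact ⟨fun hj i hi => not_lt.2 ((hv hi).trans hj), fun h => not_lt.1 (h j le_rfl)⟩
  rw [vertexCount, hset, ncard_Iio_nat, ← mem_Iio, ← hset, mem_ofPred_eq]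

lemma monotone_vertexCount (hv : Monotone v) (hv' : Tendsto v atTop atTop) :
    Monotone (vertexCount v) := fun _ _ hxy =>
  le_of_forall_lt fun _ hj => (le_iff_lt_vertexCount hv hv').1
    (((le_iff_lt_vertexCount hv hv').2 hj).trans hxy)

lemma vertexCount_eq_of_mem_Ico (hv : Monotone v) (hv' : Tendsto v atTop atTop) {n : ℕ} {x : α}
    (hx : x ∈ Ico (v n) (v (n + 1))) : vertexCount v x = n + 1 :=
  le_antisymm (not_lt.1 fun h => hx.2.not_ge ((le_iff_lt_vertexCount hv hv').2 h))
    ((le_iff_lt_vertexCount hv hv').1 hx.1)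

end Subdivision

section Multiplier

/-- The rate `((U - δ)₊)^{1/2}` of the Agmon metric, for the effective potential `U = V - E`. -/
noncomputable def agmonRate (U : ℝ → ℝ) (δ t : ℝ) : ℝ :=
  Real.sqrt (max (U t - δ) 0)

/-- The exponential `exp (∫₀ˣ ((U - δ)₊)^{1/2})` of the Agmon distance from `0` to `x`. -/
noncomputable def agmonExp (U : ℝ → ℝ) (δ x : ℝ) : ℝ :=
  Real.exp (∫ t in (0 : ℝ)..x, agmonRate U δ t)

/-- The Agmon path multiplier `F_P`, for vertices `v`, vertex factors `p` and effective potential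
`U = V - E`. -/
noncomputable def agmonMultiplier (v p : ℕ → ℝ) (U : ℝ → ℝ) (δ x : ℝ) : ℝ :=
  (∏ᶠ (j : ℕ) (_ : v j ≤ x), p j ^ (-(1 : ℝ) / 2)) * agmonExp U δ x

/-- The product `∏_{j < n} p_j^{-1/2}` of the factors of the first `n` vertices. -/
noncomputable def vertexWeight (p : ℕ → ℝ) (n : ℕ) : ℝ :=
  ∏ j ∈ Finset.range n, p j ^ (-(1 : ℝ) / 2)

variable {v p : ℕ → ℝ} {U : ℝ → ℝ} {δ : ℝ}

lemma vertexWeight_sq_eq_mul_succ_sq {n : ℕ} (hp : 0 < p n) :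
    vertexWeight p n ^ 2 = p n * vertexWeight p (n + 1) ^ 2 := by
  have cancel : p n * (p n ^ (-(1 : ℝ) / 2)) ^ 2 = 1 := by
    rw [← Real.rpow_mul_natCast hp.le, show -(1 : ℝ) / 2 * (2 : ℕ) = -1 by norm_num,
      Real.rpow_neg_one, mul_inv_cancel₀ hp.ne']
  rw [vertexWeight, vertexWeight, Finset.prod_range_succ, mul_pow, mul_left_comm, cancel, mul_one]

lemma agmonRate_sq_add {x : ℝ} (hx : δ ≤ U x) : agmonRate U δ x ^ 2 + δ = U x := by
  rw [agmonRate, max_eq_left (sub_nonneg.2 hx), Real.sq_sqrt (sub_nonneg.2 hx), sub_add_cancel]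

lemma continuousOn_agmonRate {s : Set ℝ} (hU : ContinuousOn U s) :
    ContinuousOn (agmonRate U δ) s :=
  ((hU.sub continuousOn_const).sup continuousOn_const).sqrt

lemma hasDerivAt_agmonExp (hU : ContinuousOn U (Ici 0)) {x : ℝ} (hx : 0 < x) :
    HasDerivAt (agmonExp U δ) (agmonRate U δ x * agmonExp U δ x) x := by
  have hrate : ContinuousOn (agmonRate U δ) (Ici 0) := continuousOn_agmonRate hU
  have hprimitive : HasDerivAt (fun y => ∫ t in (0 : ℝ)..y, agmonRate U δ t) (agmonRate U δ x) x :=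
    intervalIntegral.integral_hasDerivAt_right
      ((hrate.mono Icc_subset_Ici_self).intervalIntegrable_of_Icc hx.le)
      ((hrate.mono Ioi_subset_Ici_self).stronglyMeasurableAtFilter isOpen_Ioi x hx)
      (hrate.continuousAt (Ici_mem_nhds hx))
  rw [mul_comm]
  exact hprimitive.exp

lemma continuousOn_agmonExp (hU : ContinuousOn U (Ici 0)) :
    ContinuousOn (agmonExp U δ) (Ici 0) := by
  have hrate : IntervalIntegrable (agmonRate U δ) volume 0 1 :=
    ((continuousOn_agmonRate hU).mono Icc_subset_Ici_self).intervalIntegrable_of_Icc zero_le_one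
  intro x hx
  rcases eq_or_lt_of_le (mem_Ici.1 hx) with rfl | hx
  · have hcont := intervalIntegral.continuousOn_primitive_interval' hrate left_mem_uIcc
    rw [uIcc_of_le zero_le_one] at hcont
    exact ((hcont 0 (by simp)).mono_of_mem_nhdsWithin (Icc_mem_nhdsGE zero_lt_one)).rexp
  · exact (hasDerivAt_agmonExp hU hx).continuousAt.continuousWithinAt

lemma agmonMultiplier_eq_vertexWeight_mul (hv : Monotone v) (hv' : Tendsto v atTop atTop) (x : ℝ) :
    agmonMultiplier v p U δ x = vertexWeight p (vertexCount v x) * agmonExp U δ x := by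
  rw [agmonMultiplier, vertexWeight]
  congr 1
  refine finprod_cond_eq_prod_of_cond_iff _ fun {j} _ => ?_
  rw [Finset.mem_range, le_iff_lt_vertexCount hv hv']

lemma eqOn_agmonMultiplier (hv : Monotone v) (hv' : Tendsto v atTop atTop) (n : ℕ) :
    EqOn (agmonMultiplier v p U δ) (fun x => vertexWeight p (n + 1) * agmonExp U δ x)
      (Ico (v n) (v (n + 1))) := fun x hx => by
  simp only [agmonMultiplier_eq_vertexWeight_mul hv hv', vertexCount_eq_of_mem_Ico hv hv' hx]

lemma aestronglyMeasurable_agmonMultiplier (hv : Monotone v) (hv' : Tendsto v atTop atTop)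
    (hU : ContinuousOn U (Ici 0)) :
    AEStronglyMeasurable (agmonMultiplier v p U δ) (volume.restrict (Ici 0)) := by
  have hweight : Measurable fun x => vertexWeight p (vertexCount v x) :=
    (measurable_from_top (f := vertexWeight p)).comp (monotone_vertexCount hv hv').measurable
  rw [funext (agmonMultiplier_eq_vertexWeight_mul hv hv')]
  exact hweight.aestronglyMeasurable.mul
    ((continuousOn_agmonExp hU).aestronglyMeasurable measurableSet_Ici)

lemma exists_abs_agmonMultiplier_le (hv : Monotone v) (hv' : Tendsto v atTop atTop)
    (hU : ContinuousOn U (Ici 0)) (b : ℝ) :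
    ∃ C, ∀ x ∈ Icc 0 b, |agmonMultiplier v p U δ x| ≤ C := by
  obtain ⟨A, hA⟩ := ((finite_Iic (vertexCount v b)).image fun n => |vertexWeight p n|).bddAbove
  obtain ⟨B, hB⟩ := isCompact_Icc.exists_bound_of_continuousOn
    ((continuousOn_agmonExp (δ := δ) hU).mono fun x (hx : x ∈ Icc 0 b) => hx.1)
  refine ⟨A * B, fun x hx => ?_⟩
  have hweight : |vertexWeight p (vertexCount v x)| ≤ A :=
    hA (mem_image_of_mem _ (monotone_vertexCount hv hv' hx.2))
  rw [agmonMultiplier_eq_vertexWeight_mul hv hv', abs_mul]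
  exact mul_le_mul hweight (hB x hx) (abs_nonneg _) ((abs_nonneg _).trans hweight)

/-- `F` behaves from the vertex `v k` on like an Agmon path multiplier of rate `κ`: it solves
`F' = κ F` on the edges, is right-continuous at the vertices, and `F²` is divided by `p_n` in
passing through `v n`. -/
structure IsPathMultiplier (v p : ℕ → ℝ) (κ F : ℝ → ℝ) (k : ℕ) : Prop where
  hasDerivAt : ∀ n ≥ k, ∀ x ∈ Ioo (v n) (v (n + 1)), HasDerivAt F (κ x * F x) x
  continuousWithinAt : ∀ n ≥ k, ContinuousWithinAt F (Ioi (v n)) (v n)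
  tendsto_sq_left : ∀ n > k, Tendsto (fun x => F x ^ 2) (𝓝[<] v n) (𝓝 (p n * F (v n) ^ 2))

lemma isPathMultiplier_agmonMultiplier (hv : StrictMono v) (hv' : Tendsto v atTop atTop)
    (hp : ∀ n, 0 < p n) (hU : ContinuousOn U (Ici 0)) {k : ℕ} (hk : 0 ≤ v k) :
    IsPathMultiplier v p (agmonRate U δ) (agmonMultiplier v p U δ) k where
  hasDerivAt n hn x hx := by
    have hx₀ : 0 < x := (hk.trans (hv.monotone hn)).trans_lt hx.1
    rw [eqOn_agmonMultiplier hv.monotone hv' n (Ioo_subset_Ico_self hx), mul_left_comm]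
    refine ((hasDerivAt_agmonExp hU hx₀).const_mul _).congr_of_eventuallyEq ?_
    filter_upwards [Ioo_mem_nhds hx.1 hx.2] with y hy
    exact eqOn_agmonMultiplier hv.monotone hv' n (Ioo_subset_Ico_self hy)
  continuousWithinAt n hn := by
    have hvn : 0 ≤ v n := hk.trans (hv.monotone hn)
    have hlt : v n < v (n + 1) := hv n.lt_succ_self
    refine ContinuousWithinAt.congr_of_eventuallyEq (((continuousOn_agmonExp hU (v n) hvn).mono
      (Ioi_subset_Ici hvn)).const_mul (vertexWeight p (n + 1))) ?_
      (eqOn_agmonMultiplier hv.monotone hv' n ⟨le_rfl, hlt⟩)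
    filter_upwards [Ioo_mem_nhdsGT hlt] with y hy
    exact eqOn_agmonMultiplier hv.monotone hv' n (Ioo_subset_Ico_self hy)
  tendsto_sq_left n hn := by
    obtain ⟨n, rfl⟩ : ∃ m, n = m + 1 := Nat.exists_eq_succ_of_ne_zero (by lia)
    have hvn : 0 < v (n + 1) := hk.trans_lt (hv hn)
    have hvalue : p (n + 1) * agmonMultiplier v p U δ (v (n + 1)) ^ 2 =
        (vertexWeight p (n + 1) * agmonExp U δ (v (n + 1))) ^ 2 := by
      rw [eqOn_agmonMultiplier hv.monotone hv' (n + 1) ⟨le_rfl, hv (n + 1).lt_succ_self⟩, mul_pow,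
        mul_pow, vertexWeight_sq_eq_mul_succ_sq (hp (n + 1)), mul_assoc]
    rw [hvalue]
    refine Tendsto.congr' ?_ ((((hasDerivAt_agmonExp hU hvn).continuousAt.const_mul
      (vertexWeight p (n + 1))).pow 2).mono_left nhdsWithin_le_nhds)
    filter_upwards [Ioo_mem_nhdsLT (hv n.lt_succ_self)] with y hy
    simp only [eqOn_agmonMultiplier hv.monotone hv' n (Ioo_subset_Ico_self hy), Pi.pow_apply]

end Multiplier

section Flux

/-- `ψ` is, from the vertex `v k` on, a nonnegative and nonincreasing solution of `ψ'' = U ψ` on the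
edges of the path, continuous across the vertices, whose derivative is multiplied by `p_n` in
passing through `v n`. -/
structure IsDecayingPathSolution (v p : ℕ → ℝ) (U ψ : ℝ → ℝ) (k : ℕ) : Prop where
  continuousOn : ContinuousOn ψ (Ici (v k))
  nonneg : ∀ x ≥ v k, 0 ≤ ψ x
  differentiableAt : ∀ n ≥ k, ∀ x ∈ Ioo (v n) (v (n + 1)), DifferentiableAt ℝ ψ x
  hasDerivAt_deriv : ∀ n ≥ k, ∀ x ∈ Ioo (v n) (v (n + 1)), HasDerivAt (deriv ψ) (U x * ψ x) x
  deriv_nonpos : ∀ n ≥ k, ∀ x ∈ Ioo (v n) (v (n + 1)), deriv ψ x ≤ 0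
  exists_jump : ∀ n ≥ k, ∃ dL dR : ℝ, HasDerivWithinAt ψ dL (Iic (v n)) (v n) ∧
    HasDerivWithinAt ψ dR (Ici (v n)) (v n) ∧ dR = p n * dL

/-- The flux `F² ψ ψ'`, with the right derivative of `ψ`, so that its value at a vertex belongs to
the edge that starts there. -/
noncomputable def agmonFlux (F ψ : ℝ → ℝ) (x : ℝ) : ℝ :=
  F x ^ 2 * ψ x * derivWithin ψ (Ici x) x

lemma agmonFlux_eq_of_hasDerivWithinAt {F ψ : ℝ → ℝ} {x d : ℝ}
    (hψ : HasDerivWithinAt ψ d (Ici x) x) : agmonFlux F ψ x = F x ^ 2 * ψ x * d := by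
  rw [agmonFlux, hψ.derivWithin (uniqueDiffWithinAt_Ici x)]

variable {v p : ℕ → ℝ} {U ψ κ F : ℝ → ℝ} {δ : ℝ} {k n : ℕ} {x : ℝ}

namespace IsDecayingPathSolution

lemma of_contDiffOn (hcont : ContinuousOn ψ (Ici (v k))) (hnonneg : ∀ x ≥ v k, 0 ≤ ψ x)
    (hsmooth : ∀ n ≥ k, ContDiffOn ℝ 2 ψ (Ioo (v n) (v (n + 1))))
    (hsol : ∀ n ≥ k, ∀ x ∈ Ioo (v n) (v (n + 1)), deriv (deriv ψ) x = U x * ψ x)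
    (hderiv : ∀ n ≥ k, ∀ x ∈ Ioo (v n) (v (n + 1)), deriv ψ x ≤ 0)
    (hjump : ∀ n ≥ k, ∃ dL dR : ℝ, HasDerivWithinAt ψ dL (Iic (v n)) (v n) ∧
      HasDerivWithinAt ψ dR (Ici (v n)) (v n) ∧ dR = p n * dL) :
    IsDecayingPathSolution v p U ψ k where
  continuousOn := hcont
  nonneg := hnonneg
  differentiableAt n hn x hx :=
    ((hsmooth n hn).differentiableOn two_ne_zero).differentiableAt (isOpen_Ioo.mem_nhds hx)
  hasDerivAt_deriv n hn x hx := by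
    have hderiv_smooth : ContDiffOn ℝ 1 (deriv ψ) (Ioo (v n) (v (n + 1))) :=
      (hsmooth n hn).deriv_of_isOpen isOpen_Ioo (by norm_num)
    rw [← hsol n hn x hx]
    exact ((hderiv_smooth.differentiableOn one_ne_zero).differentiableAt
      (isOpen_Ioo.mem_nhds hx)).hasDerivAt
  deriv_nonpos := hderiv
  exists_jump := hjump

lemma mono {l : ℕ} (hψ : IsDecayingPathSolution v p U ψ k) (hv : Monotone v) (hkl : k ≤ l) :
    IsDecayingPathSolution v p U ψ l where
  continuousOn := hψ.continuousOn.mono (Ici_subset_Ici.2 (hv hkl))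
  nonneg x hx := hψ.nonneg x ((hv hkl).trans hx)
  differentiableAt n hn := hψ.differentiableAt n (hkl.trans hn)
  hasDerivAt_deriv n hn := hψ.hasDerivAt_deriv n (hkl.trans hn)
  deriv_nonpos n hn := hψ.deriv_nonpos n (hkl.trans hn)
  exists_jump n hn := hψ.exists_jump n (hkl.trans hn)

lemma convexOn_edge (hψ : IsDecayingPathSolution v p U ψ k) (hv : Monotone v)
    (hU : ∀ x > v k, 0 ≤ U x) (hn : k ≤ n) : ConvexOn ℝ (Icc (v n) (v (n + 1))) ψ := by
  have hvk : ∀ x ∈ Ioo (v n) (v (n + 1)), v k < x := fun x hx => (hv hn).trans_lt hx.1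
  refine convexOn_of_hasDerivWithinAt2_nonneg (f' := deriv ψ) (f'' := fun x => U x * ψ x)
    (convex_Icc _ _) (hψ.continuousOn.mono fun x hx => (hv hn).trans hx.1) ?_ ?_ ?_
  all_goals rw [interior_Icc]; intro x hx
  · exact (hψ.differentiableAt n hn x hx).hasDerivAt.hasDerivWithinAt
  · exact (hψ.hasDerivAt_deriv n hn x hx).hasDerivWithinAt
  · exact mul_nonneg (hU x (hvk x hx)) (hψ.nonneg x (hvk x hx).le)

lemma agmonFlux_eq (hψ : IsDecayingPathSolution v p U ψ k) (hn : k ≤ n)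
    (hx : x ∈ Ioo (v n) (v (n + 1))) : agmonFlux F ψ x = F x ^ 2 * ψ x * deriv ψ x :=
  agmonFlux_eq_of_hasDerivWithinAt (hψ.differentiableAt n hn x hx).hasDerivAt.hasDerivWithinAt

-- Agmon's identity: complete the square in `F² (ψ'² + 2 κ ψ ψ' + U ψ²)`.
lemma hasDerivAt_agmonFlux (hψ : IsDecayingPathSolution v p U ψ k)
    (hF : IsPathMultiplier v p κ F k) (hn : k ≤ n) (hx : x ∈ Ioo (v n) (v (n + 1))) :
    HasDerivAt (agmonFlux F ψ)
      (F x ^ 2 * ((deriv ψ x + κ x * ψ x) ^ 2 + (U x - κ x ^ 2) * ψ x ^ 2)) x := by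
  have hprod := (((hF.hasDerivAt n hn x hx).fun_pow 2).fun_mul
    (hψ.differentiableAt n hn x hx).hasDerivAt).fun_mul (hψ.hasDerivAt_deriv n hn x hx)
  refine (hprod.congr_of_eventuallyEq ?_).congr_deriv (by norm_num; ring)
  filter_upwards [Ioo_mem_nhds hx.1 hx.2] with y hy using hψ.agmonFlux_eq hn hy

lemma le_deriv_agmonFlux (hψ : IsDecayingPathSolution v p U ψ k)
    (hF : IsPathMultiplier v p κ F k) (hv : Monotone v) (hκ : ∀ x > v k, κ x ^ 2 + δ ≤ U x)
    (hn : k ≤ n) (hx : x ∈ Ioo (v n) (v (n + 1))) :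
    F x ^ 2 * ((deriv ψ x + κ x * ψ x) ^ 2 + δ * ψ x ^ 2) ≤ deriv (agmonFlux F ψ) x := by
  have hδ : δ ≤ U x - κ x ^ 2 := by linarith [hκ x ((hv hn).trans_lt hx.1)]
  rw [(hψ.hasDerivAt_agmonFlux hF hn hx).deriv]
  gcongr

lemma mul_sq_le_deriv_agmonFlux (hψ : IsDecayingPathSolution v p U ψ k)
    (hF : IsPathMultiplier v p κ F k) (hv : Monotone v) (hκ : ∀ x > v k, κ x ^ 2 + δ ≤ U x)
    (hn : k ≤ n) (hx : x ∈ Ioo (v n) (v (n + 1))) :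
    δ * (F x * ψ x) ^ 2 ≤ deriv (agmonFlux F ψ) x := by
  refine le_trans ?_ (hψ.le_deriv_agmonFlux hF hv hκ hn hx)
  linarith [mul_nonneg (sq_nonneg (F x)) (sq_nonneg (deriv ψ x + κ x * ψ x))]

lemma hasDerivAt_multiplier_mul_sq (hψ : IsDecayingPathSolution v p U ψ k)
    (hF : IsPathMultiplier v p κ F k) (hn : k ≤ n) (hx : x ∈ Ioo (v n) (v (n + 1))) :
    HasDerivAt (fun y => (F y * ψ y) ^ 2)
      (F x ^ 2 * (2 * ψ x * (deriv ψ x + κ x * ψ x))) x :=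
  (((hF.hasDerivAt n hn x hx).fun_mul
    (hψ.differentiableAt n hn x hx).hasDerivAt).fun_pow 2).congr_deriv (by norm_num; ring)

lemma abs_deriv_multiplier_mul_sq_le (hψ : IsDecayingPathSolution v p U ψ k)
    (hF : IsPathMultiplier v p κ F k) (hv : Monotone v) (hδ : 0 < δ)
    (hκ : ∀ x > v k, κ x ^ 2 + δ ≤ U x) (hn : k ≤ n) (hx : x ∈ Ioo (v n) (v (n + 1))) :
    |F x ^ 2 * (2 * ψ x * (deriv ψ x + κ x * ψ x))| ≤ (√δ)⁻¹ * deriv (agmonFlux F ψ) x := by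
  have young : √δ * |2 * ψ x * (deriv ψ x + κ x * ψ x)| ≤
      (deriv ψ x + κ x * ψ x) ^ 2 + δ * ψ x ^ 2 := by
    have := two_mul_le_add_sq (√δ * |ψ x|) |deriv ψ x + κ x * ψ x|
    rw [mul_pow, Real.sq_sqrt hδ.le, sq_abs, sq_abs] at this
    rw [abs_mul, abs_mul, abs_two]
    linarith
  rw [abs_mul, abs_of_nonneg (sq_nonneg (F x)), le_inv_mul_iff₀ (Real.sqrt_pos.2 hδ),
    mul_left_comm]
  exact (mul_le_mul_of_nonneg_left young (sq_nonneg _)).trans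
    (hψ.le_deriv_agmonFlux hF hv hκ hn hx)

lemma monotoneOn_agmonFlux_Ioo (hψ : IsDecayingPathSolution v p U ψ k)
    (hF : IsPathMultiplier v p κ F k) (hv : Monotone v) (hκ : ∀ x > v k, κ x ^ 2 ≤ U x)
    (hn : k ≤ n) : MonotoneOn (agmonFlux F ψ) (Ioo (v n) (v (n + 1))) := by
  have hderiv := fun x => hψ.hasDerivAt_agmonFlux (x := x) hF hn
  refine monotoneOn_of_deriv_nonneg (convex_Ioo _ _)
    (fun x hx => (hderiv x hx).continuousAt.continuousWithinAt)
    (fun x hx => (hderiv x (interior_subset hx)).differentiableAt.differentiableWithinAt)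
    (fun x hx => ?_)
  have hle := hψ.mul_sq_le_deriv_agmonFlux (δ := 0) hF hv (by simpa using hκ) hn
    (interior_subset hx)
  rwa [zero_mul] at hle

-- `ψ'` is not known to be continuous up to the vertex, but by convexity the right derivative of `ψ`
-- at `v n` is at most `ψ'` inside the edge.
lemma agmonFlux_vertex_le (hψ : IsDecayingPathSolution v p U ψ k)
    (hF : IsPathMultiplier v p κ F k) (hv : Monotone v) (hκ : ∀ x > v k, κ x ^ 2 ≤ U x)
    (hn : k ≤ n) (hx : x ∈ Ioo (v n) (v (n + 1))) : agmonFlux F ψ (v n) ≤ agmonFlux F ψ x := by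
  obtain ⟨-, dR, -, hdR, -⟩ := hψ.exists_jump n hn
  have hconvex := hψ.convexOn_edge hv (fun y hy => (sq_nonneg _).trans (hκ y hy)) hn
  have hlim : Tendsto (fun y => F y ^ 2 * ψ y * dR) (𝓝[>] v n) (𝓝 (agmonFlux F ψ (v n))) := by
    rw [agmonFlux_eq_of_hasDerivWithinAt hdR]
    exact (((hF.continuousWithinAt n hn).pow 2).mul
      (hdR.continuousWithinAt.mono Ioi_subset_Ici_self)).mul_const dR
  refine le_of_tendsto hlim ?_
  filter_upwards [Ioo_mem_nhdsGT hx.1] with y hy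
  have hy' : y ∈ Ioo (v n) (v (n + 1)) := ⟨hy.1, hy.2.trans hx.2⟩
  have hdR_le : dR ≤ deriv ψ y :=
    (hconvex.le_slope_of_hasDerivWithinAt_Ioi (left_mem_Icc.2 (hv n.le_succ))
      (Ioo_subset_Icc_self hy') hy.1 (hdR.mono Ioi_subset_Ici_self)).trans
    (hconvex.slope_le_of_hasDerivAt (left_mem_Icc.2 (hv n.le_succ))
      (Ioo_subset_Icc_self hy') hy.1 (hψ.differentiableAt n hn y hy').hasDerivAt)
  calc F y ^ 2 * ψ y * dR ≤ F y ^ 2 * ψ y * deriv ψ y :=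
        mul_le_mul_of_nonneg_left hdR_le
          (mul_nonneg (sq_nonneg _) (hψ.nonneg y ((hv hn).trans hy.1.le)))
    _ = agmonFlux F ψ y := (hψ.agmonFlux_eq hn hy').symm
    _ ≤ agmonFlux F ψ x := hψ.monotoneOn_agmonFlux_Ioo hF hv hκ hn hy' hx hy.2.le

-- The jump `p` of `ψ'` cancels the jump `p⁻¹` of `F²`.
lemma agmonFlux_le_vertex_succ (hψ : IsDecayingPathSolution v p U ψ k)
    (hF : IsPathMultiplier v p κ F k) (hv : Monotone v) (hκ : ∀ x > v k, κ x ^ 2 ≤ U x)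
    (hn : k ≤ n) (hx : x ∈ Ioo (v n) (v (n + 1))) :
    agmonFlux F ψ x ≤ agmonFlux F ψ (v (n + 1)) := by
  obtain ⟨dL, dR, hdL, hdR, hjump⟩ := hψ.exists_jump (n + 1) (by lia)
  have hconvex := hψ.convexOn_edge hv (fun y hy => (sq_nonneg _).trans (hκ y hy)) hn
  have hlim : Tendsto (fun y => F y ^ 2 * ψ y * dL) (𝓝[<] v (n + 1))
      (𝓝 (agmonFlux F ψ (v (n + 1)))) := by
    rw [agmonFlux_eq_of_hasDerivWithinAt hdR, show F (v (n + 1)) ^ 2 * ψ (v (n + 1)) * dR =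
      p (n + 1) * F (v (n + 1)) ^ 2 * ψ (v (n + 1)) * dL by rw [hjump]; ring]
    exact ((hF.tendsto_sq_left (n + 1) (by lia)).mul
      (hdL.continuousWithinAt.mono Iio_subset_Iic_self)).mul_const dL
  refine ge_of_tendsto hlim ?_
  filter_upwards [Ioo_mem_nhdsLT hx.2] with y hy
  have hy' : y ∈ Ioo (v n) (v (n + 1)) := ⟨hx.1.trans hy.1, hy.2⟩
  have hle_dL : deriv ψ y ≤ dL :=
    (hconvex.le_slope_of_hasDerivAt (Ioo_subset_Icc_self hy') (right_mem_Icc.2 (hv n.le_succ))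
      hy.2 (hψ.differentiableAt n hn y hy').hasDerivAt).trans
    (hconvex.slope_le_of_hasDerivWithinAt_Iio (Ioo_subset_Icc_self hy')
      (right_mem_Icc.2 (hv n.le_succ)) hy.2 (hdL.mono Iio_subset_Iic_self))
  calc agmonFlux F ψ x ≤ agmonFlux F ψ y :=
        hψ.monotoneOn_agmonFlux_Ioo hF hv hκ hn hx hy' hy.1.le
    _ = F y ^ 2 * ψ y * deriv ψ y := hψ.agmonFlux_eq hn hy'
    _ ≤ F y ^ 2 * ψ y * dL := mul_le_mul_of_nonneg_left hle_dL
        (mul_nonneg (sq_nonneg _) (hψ.nonneg y ((hv hn).trans hy'.1.le)))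

lemma monotoneOn_agmonFlux (hψ : IsDecayingPathSolution v p U ψ k)
    (hF : IsPathMultiplier v p κ F k) (hv : StrictMono v) (hv' : Tendsto v atTop atTop)
    (hκ : ∀ x > v k, κ x ^ 2 ≤ U x) : MonotoneOn (agmonFlux F ψ) (Ici (v k)) := by
  refine monotoneOn_Ici_of_monotoneOn_Icc hv.monotone hv' fun n hn => ?_
  have hlt : v n < v (n + 1) := hv n.lt_succ_self
  have hleft := fun x => hψ.agmonFlux_vertex_le (x := x) hF hv.monotone hκ hn
  have hright := fun x => hψ.agmonFlux_le_vertex_succ (x := x) hF hv.monotone hκ hn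
  obtain ⟨y, hy⟩ := nonempty_Ioo.2 hlt
  rw [← Ico_insert_right hlt.le, ← Ioo_insert_left hlt]
  refine monotoneOn_insert_iff.2 ⟨?_, fun x hx hx' => ?_, monotoneOn_insert_iff.2
    ⟨fun x hx hx' => absurd hx.1 hx'.not_gt, fun x hx _ => hleft x hx,
      hψ.monotoneOn_agmonFlux_Ioo hF hv.monotone hκ hn⟩⟩
  · rintro x (rfl | hx) -
    exacts [(hleft y hy).trans (hright y hy), hright x hx]
  · rw [Ioo_insert_left hlt] at hx
    exact absurd hx.2 hx'.not_gt

lemma agmonFlux_nonpos (hψ : IsDecayingPathSolution v p U ψ k)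
    (hF : IsPathMultiplier v p κ F k) (hv : StrictMono v) (hv' : Tendsto v atTop atTop)
    (hκ : ∀ x > v k, κ x ^ 2 ≤ U x) (hx : v k ≤ x) : agmonFlux F ψ x ≤ 0 := by
  obtain ⟨n, hn, hxn⟩ := exists_mem_Ico_of_le hv.monotone hv' hx
  obtain ⟨y, hxy, hyn⟩ := exists_between hxn.2
  have hy : y ∈ Ioo (v n) (v (n + 1)) := ⟨hxn.1.trans_lt hxy, hyn⟩
  calc agmonFlux F ψ x ≤ agmonFlux F ψ y :=
        hψ.monotoneOn_agmonFlux hF hv hv' hκ hx (hx.trans hxy.le) hxy.le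
    _ = F y ^ 2 * ψ y * deriv ψ y := hψ.agmonFlux_eq hn hy
    _ ≤ 0 := mul_nonpos_of_nonneg_of_nonpos
        (mul_nonneg (sq_nonneg _) (hψ.nonneg y (hx.trans hxy.le))) (hψ.deriv_nonpos n hn y hy)

lemma integrableOn_multiplier_mul_sq (hψ : IsDecayingPathSolution v p U ψ k)
    (hF : IsPathMultiplier v p κ F k) (hv : StrictMono v) (hv' : Tendsto v atTop atTop)
    (hδ : 0 < δ) (hκ : ∀ x > v k, κ x ^ 2 + δ ≤ U x)
    (hmeas : AEStronglyMeasurable F (volume.restrict (Ioi (v k)))) :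
    IntegrableOn (fun x => (F x * ψ x) ^ 2) (Ioi (v k)) := by
  have hκ₀ : ∀ x > v k, κ x ^ 2 ≤ U x := fun x hx => by linarith [hκ x hx]
  have hflux : IntegrableOn (deriv (agmonFlux F ψ)) (Ioi (v k)) :=
    integrableOn_Ioi_deriv_of_monotoneOn (hψ.monotoneOn_agmonFlux hF hv hv' hκ₀)
      ⟨0, forall_mem_image.2 fun x hx => hψ.agmonFlux_nonpos hF hv hv' hκ₀ hx⟩
  have hψmeas : AEStronglyMeasurable ψ (volume.restrict (Ioi (v k))) :=
    (hψ.continuousOn.mono Ioi_subset_Ici_self).aestronglyMeasurable measurableSet_Ioi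
  refine (hflux.const_mul δ⁻¹).mono' ((hmeas.mul hψmeas).pow 2) ?_
  have hvertex : ∀ᵐ x ∂volume.restrict (Ioi (v k)), x ∉ range v :=
    ae_restrict_of_ae ((countable_range v).ae_notMem _)
  filter_upwards [ae_restrict_mem measurableSet_Ioi, hvertex] with x hx hxv
  obtain ⟨n, hn, hxn⟩ := exists_mem_Ico_of_le hv.monotone hv' (le_of_lt hx)
  have hxn' : x ∈ Ioo (v n) (v (n + 1)) := ⟨hxn.1.lt_of_ne fun h => hxv ⟨n, h⟩, hxn.2⟩
  rw [Real.norm_of_nonneg (sq_nonneg _), le_inv_mul_iff₀ hδ]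
  exact hψ.mul_sq_le_deriv_agmonFlux hF hv.monotone hκ hn hxn'

lemma multiplier_mul_sq_le_of_mem_Ioo (hψ : IsDecayingPathSolution v p U ψ k)
    (hF : IsPathMultiplier v p κ F k) {ε : ℝ} (hε : 0 < ε) (hgap : ∀ n, ε ≤ v (n + 1) - v n)
    (hδ : 0 < δ) (hκ : ∀ x > v k, κ x ^ 2 + δ ≤ U x) (hn : k ≤ n)
    (hx : x ∈ Ioo (v n) (v (n + 1))) :
    (F x * ψ x) ^ 2 ≤ (2 / (δ * ε) + (√δ)⁻¹) * -agmonFlux F ψ (v k) := by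
  have hv : StrictMono v := strictMono_nat_of_lt_succ fun n => by linarith [hgap n]
  have hv' : Tendsto v atTop atTop := tendsto_atTop_of_le_sub hε hgap
  have hκ₀ : ∀ x > v k, κ x ^ 2 ≤ U x := fun x hx => by linarith [hκ x hx]
  have hmono := hψ.monotoneOn_agmonFlux hF hv hv' hκ₀
  have hnonpos := fun y => hψ.agmonFlux_nonpos (x := y) hF hv hv' hκ₀
  have hvk : ∀ y ∈ Ioo (v n) (v (n + 1)), v k ≤ y := fun y hy => (hv.monotone hn).trans hy.1.le
  have hM : 0 ≤ -agmonFlux F ψ (v k) := neg_nonneg.2 (hnonpos _ le_rfl)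
  calc (F x * ψ x) ^ 2
      ≤ 2 * -agmonFlux F ψ (v k) / (δ * (v (n + 1) - v n)) + (√δ)⁻¹ * -agmonFlux F ψ (v k) :=
        le_of_mul_le_deriv_of_abs_deriv_le hδ (by positivity)
          (fun y hy => hψ.hasDerivAt_multiplier_mul_sq hF hn hy)
          (fun y hy => (hψ.hasDerivAt_agmonFlux hF hn hy).differentiableAt.hasDerivAt)
          (fun y hy => hψ.mul_sq_le_deriv_agmonFlux hF hv.monotone hκ hn hy)
          (fun y hy => hψ.abs_deriv_multiplier_mul_sq_le hF hv.monotone hδ hκ hn hy)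
          (fun y hy z hz => by
            linarith [hmono self_mem_Ici (hvk y hy) (hvk y hy), hnonpos z (hvk z hz)]) hx
    _ ≤ 2 * -agmonFlux F ψ (v k) / (δ * ε) + (√δ)⁻¹ * -agmonFlux F ψ (v k) := by
        gcongr
        exact hgap n
    _ = _ := by ring

lemma multiplier_mul_sq_le (hψ : IsDecayingPathSolution v p U ψ k)
    (hF : IsPathMultiplier v p κ F k) {ε : ℝ} (hε : 0 < ε) (hgap : ∀ n, ε ≤ v (n + 1) - v n)
    (hδ : 0 < δ) (hκ : ∀ x > v k, κ x ^ 2 + δ ≤ U x) (hx : v k ≤ x) :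
    (F x * ψ x) ^ 2 ≤ (2 / (δ * ε) + (√δ)⁻¹) * -agmonFlux F ψ (v k) := by
  have hlt : ∀ n, v n < v (n + 1) := fun n => by linarith [hgap n]
  have hv : Monotone v := (strictMono_nat_of_lt_succ hlt).monotone
  have hedge := fun n y => hψ.multiplier_mul_sq_le_of_mem_Ioo (n := n) (x := y) hF hε hgap hδ hκ
  obtain ⟨n, hn, hxn⟩ := exists_mem_Ico_of_le hv (tendsto_atTop_of_le_sub hε hgap) hx
  rcases hxn.1.eq_or_lt with rfl | hnx
  · have hψcont : ContinuousWithinAt ψ (Ioi (v n)) (v n) :=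
      (hψ.continuousOn (v n) hx).mono (Ioi_subset_Ici hx)
    refine le_of_tendsto (((hF.continuousWithinAt n hn).mul hψcont).pow 2) ?_
    filter_upwards [Ioo_mem_nhdsGT (hlt n)] with y hy using hedge n y hn hy
  · exact hedge n x hn ⟨hnx, hxn.2⟩

end IsDecayingPathSolution

end Flux

section Bounds

variable {v p : ℕ → ℝ} {U ψ : ℝ → ℝ} {δ : ℝ}

lemma exists_abs_agmonMultiplier_mul_le_of_mem_Icc (hv : Monotone v) (hv' : Tendsto v atTop atTop)
    (hU : ContinuousOn U (Ici 0)) {b : ℝ} (hψ : ContinuousOn ψ (Icc 0 b)) :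
    ∃ C, ∀ x ∈ Icc 0 b, |agmonMultiplier v p U δ x * ψ x| ≤ C := by
  obtain ⟨A, hA⟩ := exists_abs_agmonMultiplier_le (p := p) (δ := δ) hv hv' hU b
  obtain ⟨B, hB⟩ := isCompact_Icc.exists_bound_of_continuousOn hψ
  refine ⟨A * B, fun x hx => ?_⟩
  rw [abs_mul]
  exact mul_le_mul (hA x hx) (hB x hx) (abs_nonneg _) ((abs_nonneg _).trans (hA x hx))

lemma integrableOn_Icc_agmonMultiplier_mul_sq (hv : Monotone v) (hv' : Tendsto v atTop atTop)
    (hU : ContinuousOn U (Ici 0)) {b : ℝ} (hψ : ContinuousOn ψ (Icc 0 b)) :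
    IntegrableOn (fun x => (agmonMultiplier v p U δ x * ψ x) ^ 2) (Icc 0 b) := by
  obtain ⟨C, hC⟩ := exists_abs_agmonMultiplier_mul_le_of_mem_Icc (p := p) (δ := δ) hv hv' hU hψ
  have hmeas : AEStronglyMeasurable (agmonMultiplier v p U δ) (volume.restrict (Icc 0 b)) :=
    (aestronglyMeasurable_agmonMultiplier hv hv' hU).mono_set Icc_subset_Ici_self
  refine .of_bound measure_Icc_lt_top
    ((hmeas.mul (hψ.aestronglyMeasurable measurableSet_Icc)).pow 2) (C ^ 2) ?_
  filter_upwards [ae_restrict_mem measurableSet_Icc] with x hx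
  rw [Real.norm_of_nonneg (sq_nonneg _)]
  exact sq_le_sq.2 ((hC x hx).trans (le_abs_self C))

theorem agmon_path_metric_bound_general {ε : ℝ} (hε : 0 < ε) (hgap : ∀ n, ε ≤ v (n + 1) - v n)
    (hU : ContinuousOn U (Ici 0)) (hp : ∀ n, 0 < p n) (hψcont : ContinuousOn ψ (Ici 0)) {k : ℕ}
    (hψ : IsDecayingPathSolution v p U ψ k) (hδ : 0 < δ) (hδU : ∀ᶠ x in atTop, δ ≤ U x) :
    IntegrableOn (fun x => (agmonMultiplier v p U δ x * ψ x) ^ 2) (Ici 0) ∧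
      ∃ C, ∀ x ≥ 0, |agmonMultiplier v p U δ x * ψ x| ≤ C := by
  have hv : StrictMono v := strictMono_nat_of_lt_succ fun n => by linarith [hgap n]
  have hv' : Tendsto v atTop atTop := tendsto_atTop_of_le_sub hε hgap
  obtain ⟨l, hkl, hl₀, hlU⟩ := ((eventually_ge_atTop k).and ((hv'.eventually_ge_atTop 0).and
    (hv'.eventually_forall_ge_atTop hδU))).exists
  have hψl : IsDecayingPathSolution v p U ψ l := hψ.mono hv.monotone hkl
  have hF : IsPathMultiplier v p (agmonRate U δ) (agmonMultiplier v p U δ) l :=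
    isPathMultiplier_agmonMultiplier hv hv' hp hU hl₀
  have hκ : ∀ x > v l, agmonRate U δ x ^ 2 + δ ≤ U x := fun x hx =>
    (agmonRate_sq_add (hlU x hx.le)).le
  have hψIcc : ContinuousOn ψ (Icc 0 (v l)) := hψcont.mono Icc_subset_Ici_self
  constructor
  · rw [← Icc_union_Ioi_eq_Ici hl₀]
    exact (integrableOn_Icc_agmonMultiplier_mul_sq hv.monotone hv' hU hψIcc).union
      (hψl.integrableOn_multiplier_mul_sq hF hv hv' hδ hκ
        ((aestronglyMeasurable_agmonMultiplier hv.monotone hv' hU).mono_set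
          (Ioi_subset_Ici hl₀)))
  · obtain ⟨C, hC⟩ := exists_abs_agmonMultiplier_mul_le_of_mem_Icc (p := p) (δ := δ)
      hv.monotone hv' hU hψIcc
    refine ⟨max C √((2 / (δ * ε) + (√δ)⁻¹) * -agmonFlux (agmonMultiplier v p U δ) ψ (v l)),
      fun x hx => ?_⟩
    rcases le_total x (v l) with hxl | hlx
    · exact le_max_of_le_left (hC x ⟨hx, hxl⟩)
    · exact le_max_of_le_right
        (Real.abs_le_sqrt (hψl.multiplier_mul_sq_le hF hε hgap hδ hκ hlx))

end Bounds

/-- One-dimensional model of Theorem 1.4 (Agmon path metric bound): an infinite path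
with Kirchhoff vertices at positions `v j` is identified with `[0,∞)`; `ψ` is a
positive `L²` eigensolution with `ψ' < 0` between vertices, whose derivative drops by
the factor `p j` at `v j`.  Then for every `δ` with `0 < δ < liminf (V − E)` (the
latter expressed as: there is `m > δ` with `V x − E ≥ m` eventually), the function
`x ↦ (∏_{j : v j ≤ x} (p j)^{−1/2}) · exp(∫_0^x ((V−E−δ)₊)^{1/2}) · ψ(x)` is
square-integrable and bounded on `[0,∞)`. -/
theorem agmon_path_metric_bound (ε : ℝ) (hε : 0 < ε) (v : ℕ → ℝ)
    (hvpos : ∀ j, 0 < v j) (hvmono : StrictMono v)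
    (hgap : ∀ j, ε ≤ v (j + 1) - v j)
    (V : ℝ → ℝ) (hV : ContinuousOn V (Set.Ici 0)) (E : ℝ)
    (p : ℕ → ℝ) (hp : ∀ j, 0 < p j)
    (ψ : ℝ → ℝ) (hψcont : ContinuousOn ψ (Set.Ici 0))
    (hψpos : ∀ x ≥ (0 : ℝ), 0 < ψ x)
    (hψL2 : IntegrableOn (fun x => (ψ x) ^ 2) (Set.Ici 0))
    (hψ0 : ContDiffOn ℝ 2 ψ (Set.Ioo 0 (v 0)) ∧
      ∀ x ∈ Set.Ioo 0 (v 0),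
        -(deriv (deriv ψ) x) + V x * ψ x = E * ψ x ∧ deriv ψ x < 0)
    (hψj : ∀ j, ContDiffOn ℝ 2 ψ (Set.Ioo (v j) (v (j + 1))) ∧
      ∀ x ∈ Set.Ioo (v j) (v (j + 1)),
        -(deriv (deriv ψ) x) + V x * ψ x = E * ψ x ∧ deriv ψ x < 0)
    (hjump : ∀ j, ∃ dL dR : ℝ,
      HasDerivWithinAt ψ dL (Set.Iic (v j)) (v j) ∧
      HasDerivWithinAt ψ dR (Set.Ici (v j)) (v j) ∧ dR = p j * dL)
    (δ : ℝ) (hδ : 0 < δ)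
    (hδliminf : ∃ m, δ < m ∧ ∀ᶠ x in Filter.atTop, m ≤ V x - E) :
    IntegrableOn
      (fun x => ((∏ᶠ (j : ℕ) (_ : v j ≤ x), (p j) ^ (-(1 : ℝ) / 2)) *
        Real.exp (∫ t in (0 : ℝ)..x, Real.sqrt (max (V t - E - δ) 0)) *
        ψ x) ^ 2) (Set.Ici 0) ∧
    ∃ C : ℝ, ∀ x ≥ (0 : ℝ),
      |(∏ᶠ (j : ℕ) (_ : v j ≤ x), (p j) ^ (-(1 : ℝ) / 2)) *
        Real.exp (∫ t in (0 : ℝ)..x, Real.sqrt (max (V t - E - δ) 0)) *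
        ψ x| ≤ C := by
  obtain ⟨m, hδm, hm⟩ := hδliminf
  have hψ : IsDecayingPathSolution v p (fun x => V x - E) ψ 0 :=
    .of_contDiffOn (hψcont.mono (Ici_subset_Ici.2 (hvpos 0).le))
      (fun x hx => (hψpos x ((hvpos 0).le.trans hx)).le) (fun n _ => (hψj n).1)
      (fun n _ x hx => by linarith [((hψj n).2 x hx).1])
      (fun n _ x hx => ((hψj n).2 x hx).2.le) (fun n _ => hjump n)
  exact agmon_path_metric_bound_general hε hgap (hV.sub continuousOn_const) hp hψcont hψ hδ
    (hm.mono fun x hx => hδm.le.trans hx)
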